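/- Let $\mathbb F$ be a field and $X=\{x_1,\dots,x_n\}$. An algebraic branching program (ABP) is a finite layered directed graph with layers $L_0=\{s\},L_1,\dots,L_m=\{t\}$, all edges going from one layer to the next, each edge labeled by an element of $X\cup\mathbb F$. For nodes $u\ne v$ with $v$ reachable from $u$, the subprogram $[u,v]$ consists of all directed paths from $u$ to $v$. A strict-interval ABP is an ABP such that on every $s$-to-$t$ path each variable labels at most one edge, together with an associated interval $I_{u,v}\subseteq\{1,\dots,n\}$ (a set $\{a,a+1,\dots,b\}$ or the empty set) for every subprogram $[u,v]$, such that 1. $I_{u,v}$ contains the indices of all variables appearing in $[u,v]$; 2. if $[u,v]$ is a subprogram of $[u',v']$ (that is, $u$ is reachable from $u'$ and $v'$ is reachable from $v$, where $u=u'$ and $v=v'$ are allowed), then $I_{u,v}\subseteq I_{u',v'}$; 3. for consecutive subprograms $[u,v]$ and $[v,w]$, the intervals $I_{u,v}$ and $I_{v,w}$ are disjoint. For intervals write $I\preceq J$ if $x\le y$ for all $x\in I$, $y\in J$; for nonempty $I=[a,b]$, $J=[c,d]$ this says $b\le c$. A node $v\notin\{s,t\}$ on an $s$-to-$t$ path is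 ascending if $I_{s,v}\preceq I_{v,t}$, and descending if $I_{v,t}\preceq I_{s,v}$. Let $P$ be a strict-interval ABP and let $\rho$ be any directed $s$-to-$t$ path in $P$. Then either every node of $\rho$ other than $s$ and $t$ is ascending ($\rho$ is ascending), or every node of $\rho$ other than $s$ and $t$ is descending ($\rho$ is descending). Moreover, $\rho$ does not contain nodes $u,v\notin\{s,t\}$ (possibly $u=v$) such that $u$ is ascending, $v$ is descending, and the intervals $I_{s,u}, I_{u,t}, I_{s,v}, I_{v,t}$ are all nonempty; in particular, if all associated intervals are nonempty, no $s$-to-$t$ path contains both an ascending node and a descending node. -/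

import Mathlib

/-- An algebraic branching program over `F` in the variables `x_0, …, x_{n-1}` with node set `V`:
a layered directed graph with layers `0, …, m`, whose layer `0` is `{s}` and whose layer `m` is
`{t}`, and all of whose edges go from one layer to the next. `label u v = some e` means that there
is an edge from `u` to `v` labeled `e`, a constant (`Sum.inl`) or a variable (`Sum.inr`);
`label u v = none` means that there is no edge from `u` to `v`. -/
structure ABP (F : Type*) (n : ℕ) (V : Type*) where
  m : ℕ
  layer : V → ℕ
  s : V
  t : V
  layer_le : ∀ v, layer v ≤ m
  layer_eq_zero_iff : ∀ v, layer v = 0 ↔ v = s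
  layer_eq_m_iff : ∀ v, layer v = m ↔ v = t
  label : V → V → Option (F ⊕ Fin n)
  layer_succ : ∀ u v, label u v ≠ none → layer v = layer u + 1

namespace ABP

/-- Directed paths of an ABP. -/
inductive Path {F : Type*} {n : ℕ} {V : Type*} (P : ABP F n V) : V → V → Type _
  | nil (u : V) : Path P u u
  | cons {u v w : V} (e : F ⊕ Fin n) (h : P.label u v = some e) (ρ : Path P v w) : Path P u w

namespace Path

/-- The nodes of a path, in order, both endpoints included. -/
def nodes {F : Type*} {n : ℕ} {V : Type*} {P : ABP F n V} : {u v : V} → P.Path u v → List V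
  | _, _, .nil u => [u]
  | u, _, .cons _ _ ρ => u :: ρ.nodes

/-- The variables labeling the edges of a path, in order and with repetitions. -/
def vars {F : Type*} {n : ℕ} {V : Type*} {P : ABP F n V} : {u v : V} → P.Path u v → List (Fin n)
  | _, _, .nil _ => []
  | _, _, .cons (.inl _) _ ρ => ρ.vars
  | _, _, .cons (.inr x) _ ρ => x :: ρ.vars

end Path

/-- There is a directed path from `u` to `v`. -/
def Reaches {F : Type*} {n : ℕ} {V : Type*} (P : ABP F n V) (u v : V) : Prop :=
  Nonempty (P.Path u v)

/-- Syntactic multilinearity: every variable labels at most one edge of each `s`-to-`t` path. -/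
def SynMultilinear {F : Type*} {n : ℕ} {V : Type*} (P : ABP F n V) : Prop :=
  ∀ ρ : P.Path P.s P.t, ρ.vars.Nodup

/-- The set of (indices of) variables that appear in the subprogram `[u,v]`, that is, on some
path from `u` to `v`. -/
def subVars {F : Type*} {n : ℕ} {V : Type*} (P : ABP F n V) (u v : V) : Set (Fin n) :=
  {x | ∃ ρ : P.Path u v, x ∈ ρ.vars}

end ABP

/-- `S` is an interval `[a,b] = {a, …, b}` of indices, or empty. -/
def IsIndexInterval {n : ℕ} (S : Set (Fin n)) : Prop :=
  S = ∅ ∨ ∃ a b : Fin n, a ≤ b ∧ S = Set.Icc a b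

/-- The relation `I ⪯ J`. For nonempty intervals `I = [a,b]` and `J = [c,d]` it says `b ≤ c`
(see `precedes_Icc_iff`); it holds if `I` or `J` is empty. -/
def Precedes {n : ℕ} (I J : Set (Fin n)) : Prop :=
  ∀ x ∈ I, ∀ y ∈ J, x ≤ y

theorem precedes_Icc_iff {n : ℕ} {a b c d : Fin n} (hab : a ≤ b) (hcd : c ≤ d) :
    Precedes (Set.Icc a b) (Set.Icc c d) ↔ b ≤ c :=
  ⟨fun h => h b ⟨hab, le_rfl⟩ c ⟨le_rfl, hcd⟩, fun h _ hx _ hy => hx.2.trans (h.trans hy.1)⟩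

/-- A strict-interval ABP: a syntactically multilinear ABP in which every subprogram `[u,v]`
(`u ≠ v`, with `v` reachable from `u`) has an associated interval `I u v` such that
* `I u v` contains the indices of all variables appearing in `[u,v]`;
* the interval of a subprogram `[u,v]` of `[u',v']` is contained in the interval of `[u',v']`;
* the intervals of consecutive subprograms `[u,v]` and `[v,w]` are disjoint.
The interval may be empty, which by the first condition is possible only for a subprogram
without variables. -/
structure StrictIntervalABP (F : Type*) (n : ℕ) (V : Type*) extends ABP F n V where
  synMultilinear : toABP.SynMultilinear
  I : V → V → Set (Fin n)
  isIndexInterval : ∀ u v, u ≠ v → toABP.Reaches u v → IsIndexInterval (I u v)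
  subVars_subset : ∀ u v, u ≠ v → toABP.Reaches u v → toABP.subVars u v ⊆ I u v
  I_mono : ∀ u' u v v', u ≠ v → toABP.Reaches u' u → toABP.Reaches u v → toABP.Reaches v v' →
    I u v ⊆ I u' v'
  disjoint : ∀ u v w, u ≠ v → v ≠ w → toABP.Reaches u v → toABP.Reaches v w →
    Disjoint (I u v) (I v w)

namespace StrictIntervalABP

/-- The node `v` is ascending: `I_{s,v} ⪯ I_{v,t}`. -/
def Ascending {F : Type*} {n : ℕ} {V : Type*} (P : StrictIntervalABP F n V) (v : V) : Prop :=
  Precedes (P.I P.s v) (P.I v P.t)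

/-- The node `v` is descending: `I_{v,t} ⪯ I_{s,v}`. -/
def Descending {F : Type*} {n : ℕ} {V : Type*} (P : StrictIntervalABP F n V) (v : V) : Prop :=
  Precedes (P.I v P.t) (P.I P.s v)

/-- Both intervals that enter into the definition of an ascending or descending node `v`,
`I_{s,v}` and `I_{v,t}`, are nonempty. -/
def Nondegenerate {F : Type*} {n : ℕ} {V : Type*} (P : StrictIntervalABP F n V) (v : V) : Prop :=
  (P.I P.s v).Nonempty ∧ (P.I v P.t).Nonempty

end StrictIntervalABP

namespace ABP

theorem Reaches.cons {F : Type*} {n : ℕ} {V : Type*} {P : ABP F n V} {u v w : V}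
    {e : F ⊕ Fin n} (h : P.label u v = some e) (hvw : P.Reaches v w) : P.Reaches u w :=
  hvw.map (Path.cons e h)

theorem Path.reaches_of_mem_nodes {F : Type*} {n : ℕ} {V : Type*} {P : ABP F n V} {u v : V}
    (ρ : P.Path u v) {w : V} (hw : w ∈ ρ.nodes) : P.Reaches u w ∧ P.Reaches w v := by
  induction ρ with
  | nil u =>
    obtain rfl : w = u := by simpa [Path.nodes] using hw
    exact ⟨⟨.nil w⟩, ⟨.nil w⟩⟩
  | @cons a b c e h ρ ih =>
    obtain rfl | hw : w = a ∨ w ∈ ρ.nodes := by simpa [Path.nodes] using hw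
    · exact ⟨⟨.nil w⟩, ⟨.cons e h ρ⟩⟩
    · exact ⟨(ih hw).1.cons h, (ih hw).2⟩

theorem Path.reaches_or_reaches {F : Type*} {n : ℕ} {V : Type*} {P : ABP F n V} {u v : V}
    (ρ : P.Path u v) {x y : V} (hx : x ∈ ρ.nodes) (hy : y ∈ ρ.nodes) :
    P.Reaches x y ∨ P.Reaches y x := by
  induction ρ with
  | nil u =>
    obtain rfl : x = u := by simpa [Path.nodes] using hx
    obtain rfl : y = x := by simpa [Path.nodes] using hy
    exact .inl ⟨.nil y⟩
  | @cons a b c e h ρ ih =>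
    have hx' : x = a ∨ x ∈ ρ.nodes := by simpa [Path.nodes] using hx
    have hy' : y = a ∨ y ∈ ρ.nodes := by simpa [Path.nodes] using hy
    rcases hx' with rfl | hx'
    · exact .inl ((Path.cons e h ρ).reaches_of_mem_nodes hy).1
    rcases hy' with rfl | hy'
    · exact .inr ((Path.cons e h ρ).reaches_of_mem_nodes hx).1
    exact ih hx' hy'

end ABP

/-- Two disjoint intervals are comparable. -/
theorem IsIndexInterval.precedes_or_precedes {n : ℕ} {S T : Set (Fin n)}
    (hS : IsIndexInterval S) (hT : IsIndexInterval T) (h : Disjoint S T) :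
    Precedes S T ∨ Precedes T S := by
  rcases hS with rfl | ⟨a, b, hab, rfl⟩
  · exact .inl fun _ hx => hx.elim
  rcases hT with rfl | ⟨c, d, hcd, rfl⟩
  · exact .inr fun _ hx => hx.elim
  rw [precedes_Icc_iff hab hcd, precedes_Icc_iff hcd hab]
  by_contra! hlt
  have hmem : max a c ∈ Set.Icc a b := ⟨le_max_left _ _, max_le hab hlt.1.le⟩
  exact Set.disjoint_left.1 h hmem ⟨le_max_right _ _, max_le hlt.2.le hcd⟩

namespace StrictIntervalABP

theorem ascending_or_descending {F : Type*} {n : ℕ} {V : Type*} (P : StrictIntervalABP F n V)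
    {v : V} (hs : v ≠ P.s) (ht : v ≠ P.t) (hsv : P.toABP.Reaches P.s v)
    (hvt : P.toABP.Reaches v P.t) : P.Ascending v ∨ P.Descending v :=
  (P.isIndexInterval _ _ hs.symm hsv).precedes_or_precedes (P.isIndexInterval _ _ ht hvt)
    (P.disjoint _ _ _ hs.symm ht hsv hvt)

theorem nondegenerate_of_not_ascending {F : Type*} {n : ℕ} {V : Type*}
    {P : StrictIntervalABP F n V} {v : V} (h : ¬ P.Ascending v) : P.Nondegenerate v := by
  simp only [Ascending, Precedes, not_forall] at h
  obtain ⟨x, hx, y, hy, -⟩ := h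
  exact ⟨⟨x, hx⟩, ⟨y, hy⟩⟩

theorem nondegenerate_of_not_descending {F : Type*} {n : ℕ} {V : Type*}
    {P : StrictIntervalABP F n V} {v : V} (h : ¬ P.Descending v) : P.Nondegenerate v := by
  simp only [Descending, Precedes, not_forall] at h
  obtain ⟨x, hx, y, hy, -⟩ := h
  exact ⟨⟨y, hy⟩, ⟨x, hx⟩⟩

/-- If `v` is reachable from `u`, then `I_{s,u}` and `I_{v,t}` have no common index, while
`I_{s,u} ⊆ I_{s,v}` and `I_{v,t} ⊆ I_{u,t}`; so `u` and `v` compare them in the same direction. -/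
theorem ascending_descending_incompatible {F : Type*} {n : ℕ} {V : Type*}
    (P : StrictIntervalABP F n V) {u v : V} (hus : u ≠ P.s) (hut : u ≠ P.t) (hvt : v ≠ P.t)
    (hsu : P.toABP.Reaches P.s u) (hu : P.toABP.Reaches u P.t) (huv : P.toABP.Reaches u v)
    (hv : P.toABP.Reaches v P.t) (hne : (P.I P.s u).Nonempty) (hne' : (P.I v P.t).Nonempty) :
    ¬ (P.Ascending u ∧ P.Descending v) ∧ ¬ (P.Descending u ∧ P.Ascending v) := by
  obtain ⟨x, hx⟩ := hne
  obtain ⟨y, hy⟩ := hne'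
  have hxv : x ∈ P.I P.s v := P.I_mono _ _ _ _ hus.symm ⟨.nil _⟩ hsu huv hx
  have hyu : y ∈ P.I u P.t := P.I_mono _ _ _ _ hvt huv hv ⟨.nil _⟩ hy
  have hxy : x ≠ y := by
    rintro rfl
    exact Set.disjoint_left.1 (P.disjoint _ _ _ hus.symm hut hsu hu) hx hyu
  exact ⟨fun ⟨ha, hd⟩ => hxy (le_antisymm (ha x hx y hyu) (hd y hy x hxv)),
    fun ⟨hd, ha⟩ => hxy (le_antisymm (ha x hxv y hy) (hd y hyu x hx))⟩

end StrictIntervalABP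

theorem path_ascending_or_descending {F : Type*} [Field F] {n : ℕ} {V : Type*} [Finite V]
    (P : StrictIntervalABP F n V) (ρ : P.toABP.Path P.s P.t) :
    ((∀ v ∈ ρ.nodes, v ≠ P.s → v ≠ P.t → P.Ascending v) ∨
      (∀ v ∈ ρ.nodes, v ≠ P.s → v ≠ P.t → P.Descending v)) ∧
    ¬ ∃ u ∈ ρ.nodes, ∃ v ∈ ρ.nodes, u ≠ P.s ∧ u ≠ P.t ∧ v ≠ P.s ∧ v ≠ P.t ∧
      P.Nondegenerate u ∧ P.Nondegenerate v ∧ P.Ascending u ∧ P.Descending v := by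
  have hmixed : ¬ ∃ u ∈ ρ.nodes, ∃ v ∈ ρ.nodes, u ≠ P.s ∧ u ≠ P.t ∧ v ≠ P.s ∧ v ≠ P.t ∧
      P.Nondegenerate u ∧ P.Nondegenerate v ∧ P.Ascending u ∧ P.Descending v := by
    rintro ⟨u, hu, v, hv, hus, hut, hvs, hvt, hnu, hnv, ha, hd⟩
    obtain ⟨hsu, hu't⟩ := ρ.reaches_of_mem_nodes hu
    obtain ⟨hsv, hv't⟩ := ρ.reaches_of_mem_nodes hv
    rcases ρ.reaches_or_reaches hu hv with huv | hvu
    · exact (P.ascending_descending_incompatible hus hut hvt hsu hu't huv hv't hnu.1 hnv.2).1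
        ⟨ha, hd⟩
    · exact (P.ascending_descending_incompatible hvs hvt hut hsv hv't hvu hu't hnv.1 hnu.2).2
        ⟨hd, ha⟩
  refine ⟨?_, hmixed⟩
  have hor : ∀ v ∈ ρ.nodes, v ≠ P.s → v ≠ P.t → P.Ascending v ∨ P.Descending v :=
    fun v hv hs ht => P.ascending_or_descending hs ht (ρ.reaches_of_mem_nodes hv).1
      (ρ.reaches_of_mem_nodes hv).2
  by_contra! hcon
  obtain ⟨⟨v, hv, hvs, hvt, hva⟩, u, hu, hus, hut, hud⟩ := hcon
  exact hmixed ⟨u, hu, v, hv, hus, hut, hvs, hvt,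
    StrictIntervalABP.nondegenerate_of_not_descending hud,
    StrictIntervalABP.nondegenerate_of_not_ascending hva,
    (hor u hu hus hut).resolve_right hud, (hor v hv hvs hvt).resolve_left hva⟩
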